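/- Corollary (alignment on a subset): Suppose ⪰ is a binary relation on ℒ∞ and ⪰∂ is a binary relation on partial trajectories satisfying Axiom 1 (some reward function r* : S × A → ℝ expresses ⪰) and Axiom 2 (there exist a policy π and a transition matrix P with (π,P) unichain, together with a Markov prefix family (ℓ_h) for (π,P) with ℓ_h ∈ ℒ∞ for every h, such that for all partial trajectories h, h': h ⪰∂ h' iff ℓ_h ⪰ ℓ_{h'}). Then for any nonempty subsets S' ⊆ S and A' ⊆ A: (1) there exists a pair (r,V) that expresses ⪰∂ on (S',A'); and (2) if a pair (r,V) expresses ⪰∂ on (S',A'), then r expresses ⪰ on (S',A'). -/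

import Mathlib

open MeasureTheory Filter Finset Topology

noncomputable section

/-- The trajectory space uses the discrete (⊤) σ-algebra on `S × A`. -/
instance discreteMS (S A : Type) : MeasurableSpace (S × A) := ⊤

variable {S A : Type} [Fintype S] [DecidableEq S] [Fintype A] [DecidableEq A]
  [Nonempty S] [Nonempty A]

/-- A policy assigns to each state a probability distribution over actions. -/
def IsPolicy (π : S → A → ℝ) : Prop :=
  (∀ s a, 0 ≤ π s a) ∧ ∀ s, ∑ a, π s a = 1

/-- A transition matrix assigns to each action and state a probability distribution
over next states. -/
def IsTransition (P : A → S → S → ℝ) : Prop :=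
  (∀ a s s', 0 ≤ P a s s') ∧ ∀ a s, ∑ s', P a s s' = 1

/-- The state-transition matrix induced by a policy and a transition matrix. -/
def Mmat (π : S → A → ℝ) (P : A → S → S → ℝ) : Matrix S S ℝ :=
  Matrix.of fun s s' => ∑ a, π s a * P a s s'

/-- `(π, P)` is unichain: for every `s'`, the Cesàro averages of `(M(π,P)^t)(s,s')`
converge to a limit `μ s'` that does not depend on `s`. -/
def Unichain (π : S → A → ℝ) (P : A → S → S → ℝ) : Prop :=
  ∃ μ : S → ℝ, ∀ s s',
    Tendsto (fun T : ℕ => (∑ t ∈ range T, (Mmat π P ^ t) s s') / (T : ℝ))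
      atTop (𝓝 (μ s'))

/-- The bootstrapped return of a partial trajectory `h = (pairs, z)`. -/
def Breturn (r : S × A → ℝ) (V : S → ℝ) (h : List (S × A) × S) : ℝ :=
  (h.1.map r).sum + V h.2

/-- Membership in `ℒ∞`: a probability measure on the trajectory space `ℕ → S × A`
such that for every state `s` the relative state frequencies converge. -/
def MemLinf (ℓ : Measure (ℕ → S × A)) : Prop :=
  IsProbabilityMeasure ℓ ∧
    ∀ s : S, ∃ c : ℝ,
      Tendsto (fun T : ℕ => (∑ t ∈ range T, (ℓ {ω | (ω t).1 = s}).toReal) / (T : ℝ))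
        atTop (𝓝 c)

/-- The expected discounted return `v(ℓ,r,γ)` of a lottery `ℓ`. -/
def vdisc (ℓ : Measure (ℕ → S × A)) (r : S × A → ℝ) (γ : ℝ) : ℝ :=
  ∑' t : ℕ, γ ^ t * ∫ ω, r (ω t) ∂ℓ

/-- A reward function `r` expresses the preference relation `pref` on `ℒ∞`:
`ℓ ⪰ ℓ'` iff `γ ↦ v(ℓ,r,γ) − v(ℓ',r,γ)` converges, as `γ → 1⁻`, to a limit `≥ 0`. -/
def Expresses (r : S × A → ℝ)
    (pref : Measure (ℕ → S × A) → Measure (ℕ → S × A) → Prop) : Prop :=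
  ∀ ℓ ℓ', MemLinf ℓ → MemLinf ℓ' →
    (pref ℓ ℓ' ↔ ∃ c : ℝ, 0 ≤ c ∧
      Tendsto (fun γ : ℝ => vdisc ℓ r γ - vdisc ℓ' r γ) (𝓝[<] (1 : ℝ)) (𝓝 c))

/-- A family `(ℓ_h)` of probability measures on the trajectory space, indexed by partial
trajectories, is a Markov prefix family for `(π,P)`: the measure of any cylinder set of
length `n ≥ T` is the indicator that the cylinder agrees with `h`, times
`π(x_T)(b_T) · ∏_{k=T}^{n−1} P(b_k)(x_k)(x_{k+1}) · π(x_{k+1})(b_{k+1})`. -/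
def IsMarkovPrefixFamily (π : S → A → ℝ) (P : A → S → S → ℝ)
    (L : List (S × A) × S → Measure (ℕ → S × A)) : Prop :=
  ∀ (l : List (S × A)) (z : S) (n : ℕ), l.length ≤ n → ∀ x : ℕ → S × A,
    (L (l, z) {ω | ∀ k ≤ n, ω k = x k}).toReal =
      (if (∀ t : Fin l.length, x t = l.get t) ∧ (x l.length).1 = z then (1 : ℝ) else 0) *
        (π (x l.length).1 (x l.length).2 *
          ∏ k ∈ Finset.Ico l.length n,
            (P (x k).2 (x k).1 (x (k + 1)).1 * π (x (k + 1)).1 (x (k + 1)).2))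

/-- A partial trajectory is on `(S',A')` if its terminal state and all its states lie in
`S'` and all its actions lie in `A'`. -/
def PTrajOn (S' : Set S) (A' : Set A) (h : List (S × A) × S) : Prop :=
  h.2 ∈ S' ∧ ∀ p ∈ h.1, p.1 ∈ S' ∧ p.2 ∈ A'

/-- A measure `ℓ` is on `(S',A')` if almost every trajectory stays in `S' × A'`. -/
def MeasureOn (S' : Set S) (A' : Set A) (ℓ : Measure (ℕ → S × A)) : Prop :=
  ℓ {ω | ∀ t : ℕ, (ω t).1 ∈ S' ∧ (ω t).2 ∈ A'} = 1

/-- `(r,V)` expresses `⪰∂` on `(S',A')`: for all partial trajectories `h, h'` on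
`(S',A')`, `h ⪰∂ h'` iff `B(r,V)(h) ≥ B(r,V)(h')`. -/
def ExpressesPartialOn (S' : Set S) (A' : Set A)
    (r : S × A → ℝ) (V : S → ℝ)
    (prefP : List (S × A) × S → List (S × A) × S → Prop) : Prop :=
  ∀ h h', PTrajOn S' A' h → PTrajOn S' A' h' →
    (prefP h h' ↔ Breturn r V h' ≤ Breturn r V h)

/-- `r` expresses `⪰` on `(S',A')`: for all `ℓ, ℓ' ∈ ℒ∞` on `(S',A')`, `ℓ ⪰ ℓ'` iff
`γ ↦ v(ℓ,r,γ) − v(ℓ',r,γ)` converges, as `γ → 1⁻`, to a limit `≥ 0`. -/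
def ExpressesOn (S' : Set S) (A' : Set A) (r : S × A → ℝ)
    (pref : Measure (ℕ → S × A) → Measure (ℕ → S × A) → Prop) : Prop :=
  ∀ ℓ ℓ', MemLinf ℓ → MemLinf ℓ' → MeasureOn S' A' ℓ → MeasureOn S' A' ℓ' →
    (pref ℓ ℓ' ↔ ∃ c : ℝ, 0 ≤ c ∧
      Tendsto (fun γ : ℝ => vdisc ℓ r γ - vdisc ℓ' r γ) (𝓝[<] (1 : ℝ)) (𝓝 c))

/-!
Subtracting a constant `g` from the reward `rstar` does not change differences of discounted values,
so `g` may be taken to be the long-run average reward of the chain. The Poisson equation of the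
chain, solved twice, exhibits the expected centred rewards as second differences of a bounded
sequence; hence their discounted sums converge as `γ → 1⁻`, and the limit for a partial trajectory
`h` is its bootstrapped return for `rstar - g` and a suitable `V`. This `V` gives the first claim.

Conversely, trajectories on `S' × A'` with a common terminal state make every finite sum over
`S' × A'` comparable with every other. Two rewards that order these sums in the same way are
positive multiples of each other on `S' × A'`, because the ratio of two rewards is determined by the
rationals below it. A positive factor does not change the preference, which gives the second claim.
-/

section DiscountedSum

variable {u : ℕ → ℝ} {C γ : ℝ}

/-- The discounted sum `∑ γ ^ t * u t` as a function of `γ`; its limit as `γ → 1⁻` is the Abel sum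
of `u`. -/
def discountedSum (u : ℕ → ℝ) (γ : ℝ) : ℝ := ∑' t, γ ^ t * u t

theorem norm_pow_mul_le_of_abs_le (hu : ∀ t, |u t| ≤ C) (h0 : 0 ≤ γ) (t : ℕ) :
    ‖γ ^ t * u t‖ ≤ γ ^ t * C := by
  rw [norm_mul, Real.norm_of_nonneg (pow_nonneg h0 t), Real.norm_eq_abs]
  gcongr
  exact hu t

theorem summable_pow_mul_of_abs_le (hu : ∀ t, |u t| ≤ C) (h0 : 0 ≤ γ) (h1 : γ < 1) :
    Summable fun t => γ ^ t * u t :=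
  .of_norm_bounded ((summable_geometric_of_lt_one h0 h1).mul_right C)
    (norm_pow_mul_le_of_abs_le hu h0)

theorem abs_one_sub_mul_discountedSum_le (hu : ∀ t, |u t| ≤ C) (h0 : 0 ≤ γ) (h1 : γ < 1) :
    |(1 - γ) * discountedSum u γ| ≤ C := by
  have hpos : 0 < 1 - γ := sub_pos.2 h1
  have hle : |discountedSum u γ| ≤ (1 - γ)⁻¹ * C :=
    tsum_of_norm_bounded ((hasSum_geometric_of_lt_one h0 h1).mul_right C)
      (norm_pow_mul_le_of_abs_le hu h0)
  rw [abs_mul, abs_of_pos hpos]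
  exact (le_inv_mul_iff₀ hpos).1 hle

theorem discountedSum_eq_sum_range_add (hu : ∀ t, |u t| ≤ C) (h0 : 0 ≤ γ) (h1 : γ < 1) (n : ℕ) :
    discountedSum u γ =
      ∑ t ∈ range n, γ ^ t * u t + γ ^ n * discountedSum (fun t => u (n + t)) γ := by
  simp only [discountedSum, ← (summable_pow_mul_of_abs_le hu h0 h1).sum_add_tsum_nat_add n,
    ← tsum_mul_left]
  congr! 3 with t
  rw [add_comm t, pow_add, mul_assoc]

theorem discountedSum_fwdDiff (hu : ∀ t, |u t| ≤ C) (h0 : 0 ≤ γ) (h1 : γ < 1) :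
    discountedSum (fwdDiff 1 u) γ = (1 - γ) * discountedSum (fun t => u (1 + t)) γ - u 0 := by
  have hsub : discountedSum (fwdDiff 1 u) γ =
      discountedSum (fun t => u (1 + t)) γ - discountedSum u γ := by
    simp only [discountedSum, fwdDiff, mul_sub, add_comm _ 1]
    exact (summable_pow_mul_of_abs_le (fun t => hu (1 + t)) h0 h1).tsum_sub
      (summable_pow_mul_of_abs_le hu h0 h1)
  rw [hsub, discountedSum_eq_sum_range_add hu h0 h1 1]
  simp only [range_one, sum_singleton, pow_zero, pow_one, one_mul]
  ring

theorem abs_fwdDiff_le (hu : ∀ t, |u t| ≤ C) (t : ℕ) : |fwdDiff 1 u t| ≤ C + C :=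
  (abs_sub _ _).trans (add_le_add (hu _) (hu _))

theorem abs_discountedSum_fwdDiff_le (hu : ∀ t, |u t| ≤ C) (h0 : 0 ≤ γ) (h1 : γ < 1) :
    |discountedSum (fwdDiff 1 u) γ| ≤ C + C := by
  rw [discountedSum_fwdDiff hu h0 h1]
  exact (abs_sub _ _).trans
    (add_le_add (abs_one_sub_mul_discountedSum_le (fun t => hu (1 + t)) h0 h1) (hu 0))

theorem eventually_mem_Ioo_zero_one : ∀ᶠ γ : ℝ in 𝓝[<] 1, γ ∈ Set.Ioo (0 : ℝ) 1 :=
  Ioo_mem_nhdsLT one_pos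

theorem tendsto_id_nhdsLT_one : Tendsto (fun γ : ℝ => γ) (𝓝[<] 1) (𝓝 1) :=
  tendsto_id.mono_left nhdsWithin_le_nhds

theorem tendsto_discountedSum_fwdDiff_fwdDiff (hu : ∀ t, |u t| ≤ C) :
    Tendsto (discountedSum (fwdDiff 1 (fwdDiff 1 u))) (𝓝[<] 1) (𝓝 (-fwdDiff 1 u 0)) := by
  have hone : Tendsto (fun γ : ℝ => 1 - γ) (𝓝[<] 1) (𝓝 0) := by
    simpa using tendsto_id_nhdsLT_one.const_sub 1
  have hshift : (fun t => fwdDiff 1 u (1 + t)) = fwdDiff 1 fun t => u (1 + t) := by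
    funext t
    simp only [fwdDiff, add_assoc]
  have hbdd : ∀ᶠ γ : ℝ in 𝓝[<] 1, |discountedSum (fun t => fwdDiff 1 u (1 + t)) γ| ≤ C + C :=
    eventually_mem_Ioo_zero_one.mono fun γ hγ =>
      hshift ▸ abs_discountedSum_fwdDiff_le (fun t => hu (1 + t)) hγ.1.le hγ.2
  have hlim := (bdd_le_mul_tendsto_zero' (C + C) hbdd hone).sub_const (fwdDiff 1 u 0)
  rw [zero_sub] at hlim
  refine hlim.congr' (eventually_mem_Ioo_zero_one.mono fun γ hγ => ?_)
  rw [discountedSum_fwdDiff (abs_fwdDiff_le hu) hγ.1.le hγ.2, mul_comm]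

theorem tendsto_discountedSum_of_add {c : ℝ} (hu : ∀ t, |u t| ≤ C) (n : ℕ)
    (htail : Tendsto (discountedSum fun t => u (n + t)) (𝓝[<] 1) (𝓝 c)) :
    Tendsto (discountedSum u) (𝓝[<] 1) (𝓝 (∑ t ∈ range n, u t + c)) := by
  have hpow (t : ℕ) : Tendsto (fun γ : ℝ => γ ^ t) (𝓝[<] 1) (𝓝 1) := by
    simpa using tendsto_id_nhdsLT_one.pow t
  have hlim := (tendsto_finsetSum (range n) fun t _ => (hpow t).mul_const (u t)).add
    ((hpow n).mul htail)
  simp only [one_mul] at hlim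
  exact hlim.congr' (eventually_mem_Ioo_zero_one.mono fun γ hγ =>
    (discountedSum_eq_sum_range_add hu hγ.1.le hγ.2 n).symm)

end DiscountedSum

section CesaroLimit

open Matrix

variable {ι : Type*} [Fintype ι] [DecidableEq ι] {M : Matrix ι ι ℝ} {μ x : ι → ℝ}

theorem norm_mulVec_le_of_mem_rowStochastic (hM : M ∈ rowStochastic ℝ ι) (x : ι → ℝ) :
    ‖M *ᵥ x‖ ≤ ‖x‖ := by
  refine (pi_norm_le_iff_of_nonneg (norm_nonneg x)).2 fun i => ?_
  calc ‖∑ j, M i j * x j‖ ≤ ∑ j, M i j * ‖x‖ := norm_sum_le_of_le _ fun j _ => by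
        rw [norm_mul, Real.norm_of_nonneg (nonneg_of_mem_rowStochastic hM)]
        exact mul_le_mul_of_nonneg_left (norm_le_pi_norm x j) (nonneg_of_mem_rowStochastic hM)
    _ = ‖x‖ := by rw [← sum_mul, sum_row_of_mem_rowStochastic hM, one_mul]

theorem abs_pow_mulVec_le_of_mem_rowStochastic (hM : M ∈ rowStochastic ℝ ι) (x : ι → ℝ) (i : ι)
    (t : ℕ) : |(M ^ t *ᵥ x) i| ≤ ‖x‖ :=
  (norm_le_pi_norm _ i).trans (norm_mulVec_le_of_mem_rowStochastic (pow_mem hM t) x)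

theorem fwdDiff_pow_mulVec (M : Matrix ι ι ℝ) (x : ι → ℝ) (i : ι) :
    fwdDiff 1 (fun t : ℕ => (M ^ t *ᵥ x) i) = fun t => (M ^ t *ᵥ (M *ᵥ x - x)) i := by
  ext t
  simp only [fwdDiff, mulVec_sub, mulVec_mulVec, pow_succ, Pi.sub_apply]

/-- The Cesàro averages of the powers of `M` converge to the matrix all of whose rows are `μ`. -/
def IsCesaroLimit (M : Matrix ι ι ℝ) (μ : ι → ℝ) : Prop :=
  ∀ i j, Tendsto (fun T : ℕ => (∑ t ∈ range T, (M ^ t) i j) / (T : ℝ)) atTop (𝓝 (μ j))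

namespace IsCesaroLimit

theorem tendsto_mulVec (hμ : IsCesaroLimit M μ) (x : ι → ℝ) (i : ι) :
    Tendsto (fun T : ℕ => (∑ t ∈ range T, (M ^ t *ᵥ x) i) / (T : ℝ)) atTop (𝓝 (μ ⬝ᵥ x)) := by
  refine (tendsto_finsetSum univ fun j _ => (hμ i j).mul_const (x j)).congr fun T => ?_
  simp only [mulVec, dotProduct]
  rw [sum_comm, sum_div]
  simp only [sum_mul, sum_div, div_mul_eq_mul_div]

theorem apply_eq_dotProduct (hμ : IsCesaroLimit M μ) (hx : M *ᵥ x = x) (i : ι) :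
    x i = μ ⬝ᵥ x := by
  have hpow (t : ℕ) : M ^ t *ᵥ x = x := by
    induction t with
    | zero => rw [pow_zero, one_mulVec]
    | succ t ih => rw [pow_succ, ← mulVec_mulVec, hx, ih]
  refine tendsto_nhds_unique (tendsto_const_nhds.congr' ?_) (hμ.tendsto_mulVec x i)
  filter_upwards [eventually_ne_atTop 0] with T hT
  simp only [hpow, sum_const, card_range, nsmul_eq_mul]
  field_simp

theorem dotProduct_one [Nonempty ι] (hμ : IsCesaroLimit M μ) (hM : M ∈ rowStochastic ℝ ι) :
    μ ⬝ᵥ 1 = 1 :=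
  (hμ.apply_eq_dotProduct (one_vecMul_of_mem_rowStochastic hM) (Classical.arbitrary ι)).symm

theorem dotProduct_mulVec_sub (hμ : IsCesaroLimit M μ) (hM : M ∈ rowStochastic ℝ ι)
    (x : ι → ℝ) : μ ⬝ᵥ (M *ᵥ x - x) = 0 := by
  cases isEmpty_or_nonempty ι with
  | inl _ => exact dotProduct_of_isEmpty _ _
  | inr h =>
    obtain ⟨i⟩ := h
    refine tendsto_nhds_unique (hμ.tendsto_mulVec _ i) ?_
    refine squeeze_zero_norm (fun T => ?_)
      (tendsto_const_div_atTop_nhds_zero_nat (‖x‖ + ‖x‖))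
    have htelescope : ∑ t ∈ range T, (M ^ t *ᵥ (M *ᵥ x - x)) i =
        (M ^ T *ᵥ x) i - (M ^ 0 *ᵥ x) i := by
      rw [← sum_range_sub fun t => (M ^ t *ᵥ x) i]
      exact sum_congr rfl fun t _ => (congrFun (fwdDiff_pow_mulVec M x i) t).symm
    rw [htelescope, norm_div, Real.norm_natCast]
    gcongr
    exact (abs_sub _ _).trans (add_le_add (abs_pow_mulVec_le_of_mem_rowStochastic hM x i T)
      (abs_pow_mulVec_le_of_mem_rowStochastic hM x i 0))

/-- The Poisson equation: `M - 1` is injective, hence bijective, on the hyperplane `μ ⬝ᵥ w = 0`. -/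
theorem exists_mulVec_sub_eq (hμ : IsCesaroLimit M μ) (hM : M ∈ rowStochastic ℝ ι)
    (hx : μ ⬝ᵥ x = 0) : ∃ w, μ ⬝ᵥ w = 0 ∧ M *ᵥ w - w = x := by
  let K : Submodule ℝ (ι → ℝ) := LinearMap.ker (dotProductBilin ℝ ℝ μ)
  let D : K →ₗ[ℝ] K := (M.mulVecLin - LinearMap.id).restrict fun w _ =>
    hμ.dotProduct_mulVec_sub hM w
  have hD : Function.Injective D := by
    refine (injective_iff_map_eq_zero D).2 fun ⟨w, hw⟩ hDw => Subtype.ext (funext fun i => ?_)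
    exact (hμ.apply_eq_dotProduct (sub_eq_zero.1 (congrArg Subtype.val hDw)) i).trans hw
  obtain ⟨⟨w, hw⟩, hDw⟩ := LinearMap.injective_iff_surjective.1 hD ⟨x, hx⟩
  exact ⟨w, hw, congrArg Subtype.val hDw⟩

theorem exists_tendsto_discountedSum (hμ : IsCesaroLimit M μ) (hM : M ∈ rowStochastic ℝ ι)
    (hx : μ ⬝ᵥ x = 0) :
    ∃ v : ι → ℝ, ∀ i,
      Tendsto (discountedSum fun t => (M ^ t *ᵥ x) i) (𝓝[<] 1) (𝓝 (v i)) := by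
  obtain ⟨w, hw, rfl⟩ := hμ.exists_mulVec_sub_eq hM hx
  obtain ⟨y, -, rfl⟩ := hμ.exists_mulVec_sub_eq hM hw
  refine ⟨fun i => -fwdDiff 1 (fun t : ℕ => (M ^ t *ᵥ y) i) 0, fun i => ?_⟩
  simpa only [fwdDiff_pow_mulVec] using
    tendsto_discountedSum_fwdDiff_fwdDiff (abs_pow_mulVec_le_of_mem_rowStochastic hM y i)

end IsCesaroLimit

end CesaroLimit

section Cylinder

open PiNat

variable {X : Type*} [MeasurableSpace X] [DiscreteMeasurableSpace X] {ℓ : Measure (ℕ → X)}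

theorem measurableSet_cylinder (x : ℕ → X) (n : ℕ) : MeasurableSet (cylinder x n) := by
  rw [cylinder_eq_pi]
  exact .pi (Finset.countable_toSet _) fun _ _ => .singleton _

theorem integrable_eval [Finite X] [IsFiniteMeasure ℓ] (F : X → ℝ) (t : ℕ) :
    Integrable (fun ω => F (ω t)) ℓ :=
  (Integrable.of_finite (f := F)).comp_measurable (measurable_pi_apply (X := fun _ => X) t)

omit [DiscreteMeasurableSpace X] in
theorem abs_integral_eval_le [Fintype X] [IsProbabilityMeasure ℓ] (F : X → ℝ) (t : ℕ) :
    |∫ ω, F (ω t) ∂ℓ| ≤ ‖F‖ := by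
  simpa only [probReal_univ, mul_one, Real.norm_eq_abs] using
    norm_integral_le_of_norm_le_const (μ := ℓ) (.of_forall fun ω => norm_le_pi_norm F (ω t))

theorem setIntegral_cylinder_succ_eval (F : X → ℝ) (x : ℕ → X) (n : ℕ) :
    ∫ ω in cylinder x (n + 1), F (ω n) ∂ℓ = ℓ.real (cylinder x (n + 1)) * F (x n) := by
  rw [setIntegral_congr_fun (measurableSet_cylinder x (n + 1))
    fun ω hω => congrArg F (hω n n.lt_succ_self), setIntegral_const, smul_eq_mul]

theorem setIntegral_cylinder_eq_sum [Fintype X] {f : (ℕ → X) → ℝ} (hf : Integrable f ℓ)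
    (x : ℕ → X) (n : ℕ) :
    ∫ ω in cylinder x n, f ω ∂ℓ =
      ∑ p, ∫ ω in cylinder (Function.update x n p) (n + 1), f ω ∂ℓ := by
  rw [← iUnion_cylinder_update x n]
  refine integral_iUnion_fintype (fun p => measurableSet_cylinder _ _) (fun p q hpq => ?_)
    fun p => hf.integrableOn
  refine Set.disjoint_left.2 fun ω hp hq => hpq ?_
  simpa only [Function.update_self] using (hp n n.lt_succ_self).symm.trans (hq n n.lt_succ_self)

theorem setIntegral_cylinder_eval [Fintype X] [IsFiniteMeasure ℓ] (F : X → ℝ) (x : ℕ → X) (n : ℕ) :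
    ∫ ω in cylinder x n, F (ω n) ∂ℓ =
      ∑ p, ℓ.real (cylinder (Function.update x n p) (n + 1)) * F p := by
  rw [setIntegral_cylinder_eq_sum (integrable_eval F n)]
  simp only [setIntegral_cylinder_succ_eval, Function.update_self]

theorem measureReal_cylinder_eq_sum [Fintype X] [IsFiniteMeasure ℓ] (x : ℕ → X) (n : ℕ) :
    ℓ.real (cylinder x n) = ∑ p, ℓ.real (cylinder (Function.update x n p) (n + 1)) := by
  have h := setIntegral_cylinder_eval (ℓ := ℓ) (fun _ => 1) x n
  rw [setIntegral_const, smul_eq_mul, mul_one] at h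
  simpa only [mul_one] using h

theorem integral_congr_of_cylinder [Finite X] [Nonempty X] {f g : (ℕ → X) → ℝ} (hf : Integrable f ℓ)
    (hg : Integrable g ℓ) (n : ℕ)
    (h : ∀ x, ∫ ω in cylinder x n, f ω ∂ℓ = ∫ ω in cylinder x n, g ω ∂ℓ) :
    ∫ ω, f ω ∂ℓ = ∫ ω, g ω ∂ℓ := by
  cases nonempty_fintype X
  induction n with
  | zero => simpa only [cylinder_zero, setIntegral_univ] using h (Classical.arbitrary _)
  | succ n ih =>
    refine ih fun x => ?_
    rw [setIntegral_cylinder_eq_sum hf, setIntegral_cylinder_eq_sum hg]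
    exact sum_congr rfl fun p _ => h _

open scoped Matrix in
theorem integral_eval_succ_eq_integral_mulVec [Fintype X] [Nonempty X] [IsFiniteMeasure ℓ]
    {Q : Matrix X X ℝ} {n : ℕ}
    (h : ∀ x : ℕ → X,
      ℓ.real (cylinder x (n + 2)) = ℓ.real (cylinder x (n + 1)) * Q (x n) (x (n + 1)))
    (F : X → ℝ) :
    ∫ ω, F (ω (n + 1)) ∂ℓ = ∫ ω, (Q *ᵥ F) (ω n) ∂ℓ := by
  refine integral_congr_of_cylinder (integrable_eval F _) (integrable_eval _ _) (n + 1) fun x => ?_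
  have hcyl (p : X) : cylinder (Function.update x (n + 1) p) (n + 1) = cylinder x (n + 1) :=
    mem_cylinder_iff_eq.1 (update_mem_cylinder x (n + 1) p)
  rw [setIntegral_cylinder_eval, setIntegral_cylinder_succ_eval, Matrix.mulVec, dotProduct, mul_sum]
  refine sum_congr rfl fun p _ => ?_
  rw [h, hcyl, Function.update_self, Function.update_of_ne n.lt_succ_self.ne, mul_assoc]

end Cylinder

section Proportionality

variable {K M : Type*} [Field K] [LinearOrder K] [IsStrictOrderedRing K] [AddMonoid M]
  {f g : M →+ K}

/-- Splitting the numerator of `q` into its positive and negative parts turns the comparison of `q`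
with a ratio into one of values of `f`, although `M` has no subtraction. -/
theorem ratCast_lt_div_iff_map_lt (f : M →+ K) {m : M} (hm : 0 < f m) (n : M) (q : ℚ) :
    (q : K) < f n / f m ↔ f (q.num.toNat • m) < f (q.den • n + (-q.num).toNat • m) := by
  have hden : (0 : K) < q.den := Nat.cast_pos.2 q.den_pos
  have hnum : (q.num : K) = q.num.toNat - (-q.num).toNat := by
    exact_mod_cast (Int.toNat_sub_toNat_neg q.num).symm
  rw [Rat.cast_def, lt_div_iff₀ hm, div_mul_eq_mul_div, div_lt_iff₀ hden, hnum, sub_mul,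
    sub_lt_iff_lt_add, map_add, map_nsmul, map_nsmul, map_nsmul, nsmul_eq_mul, nsmul_eq_mul,
    nsmul_eq_mul, mul_comm (f n)]

variable [Archimedean K]

theorem div_eq_div_of_map_lt_iff_map_lt (h : ∀ m n, f m < f n ↔ g m < g n) {m : M}
    (hf : 0 < f m) (hg : 0 < g m) (n : M) : f n / f m = g n / g m :=
  eq_of_forall_rat_lt_iff_lt fun q => by
    rw [ratCast_lt_div_iff_map_lt f hf, ratCast_lt_div_iff_map_lt g hg, h]

theorem exists_pos_eq_mul_of_map_lt_iff_map_lt (h : ∀ m n, f m < f n ↔ g m < g n) :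
    ∃ c, 0 < c ∧ ∀ m, f m = c * g m := by
  have hpos (m : M) : 0 < f m ↔ 0 < g m := by simpa only [map_zero] using h 0 m
  have hneg (m : M) : f m < 0 ↔ g m < 0 := by simpa only [map_zero] using h m 0
  by_cases hzero : ∀ m, g m = 0
  · refine ⟨1, one_pos, fun m => ?_⟩
    rw [one_mul, hzero m]
    exact le_antisymm (not_lt.1 fun hm => ((hpos m).1 hm).ne' (hzero m))
      (not_lt.1 fun hm => ((hneg m).1 hm).ne (hzero m))
  obtain ⟨m, hm⟩ := not_forall.1 hzero
  wlog hg : 0 < g m generalizing f g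
  · obtain ⟨c, hc, hfg⟩ := this (f := -f) (g := -g)
      (by simpa using fun m n => h n m) (by simpa using hneg) (by simpa using hpos)
      (by simpa using hzero) (by simpa using hm)
      (neg_pos.2 (lt_of_le_of_ne (not_lt.1 hg) hm))
    exact ⟨c, hc, by simpa using hfg⟩
  have hf := (hpos m).2 hg
  refine ⟨f m / g m, div_pos hf hg, fun n => ?_⟩
  have hcross := (div_eq_div_iff hf.ne' hg.ne').1 (div_eq_div_of_map_lt_iff_map_lt h hf hg n)
  rw [div_mul_eq_mul_div, eq_div_iff hg.ne', hcross, mul_comm]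

end Proportionality

section PolicyAverage

open Matrix

omit [DecidableEq S] [DecidableEq A] [Nonempty S] [Nonempty A]

variable {π : S → A → ℝ} {P : A → S → S → ℝ}

/-- The expectation of `F (s, a)` when `a` is drawn from the policy at `s`. -/
def policyAverage (π : S → A → ℝ) (F : S × A → ℝ) (s : S) : ℝ := ∑ a, π s a * F (s, a)

/-- The transition matrix of the chain of state–action pairs. -/
def pairTransition (π : S → A → ℝ) (P : A → S → S → ℝ) : Matrix (S × A) (S × A) ℝ :=
  .of fun x y => P x.2 x.1 y.1 * π y.1 y.2

theorem policyAverage_pairTransition_mulVec (π : S → A → ℝ) (P : A → S → S → ℝ) (F : S × A → ℝ) :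
    policyAverage π (pairTransition π P *ᵥ F) = Mmat π P *ᵥ policyAverage π F := by
  ext s
  calc ∑ a, π s a * ∑ y : S × A, P a s y.1 * π y.1 y.2 * F y
      = ∑ a, ∑ s', π s a * P a s s' * policyAverage π F s' := by
        simp only [policyAverage, Fintype.sum_prod_type, mul_sum, mul_assoc]
    _ = ∑ s', (∑ a, π s a * P a s s') * policyAverage π F s' := by
        rw [sum_comm]
        simp only [sum_mul]

theorem dotProduct_policyAverage_sub_const (hπ : IsPolicy π) {μ : S → ℝ} (hμ : μ ⬝ᵥ 1 = 1)
    (r : S × A → ℝ) (g : ℝ) :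
    μ ⬝ᵥ policyAverage π (fun x => r x - g) = μ ⬝ᵥ policyAverage π r - g := by
  have havg : policyAverage π (fun x => r x - g) = policyAverage π r - g • 1 := by
    ext s
    simp only [policyAverage, mul_sub, sum_sub_distrib, ← sum_mul, hπ.2, one_mul, Pi.sub_apply,
      Pi.smul_apply, Pi.one_apply, smul_eq_mul, mul_one]
  rw [havg, dotProduct_sub, dotProduct_smul, hμ, smul_eq_mul, mul_one]

theorem Mmat_mem_rowStochastic [DecidableEq S] (hπ : IsPolicy π) (hP : IsTransition P) :
    Mmat π P ∈ rowStochastic ℝ S := by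
  refine mem_rowStochastic_iff_sum.2
    ⟨fun s s' => sum_nonneg fun a _ => mul_nonneg (hπ.1 s a) (hP.1 a s s'), fun s => ?_⟩
  simp only [Mmat, of_apply]
  rw [sum_comm]
  simp only [← mul_sum, hP.2, mul_one, hπ.2]

end PolicyAverage

instance : DiscreteMeasurableSpace (S × A) := ⟨fun _ => trivial⟩

theorem exists_forall_eq_get {X : Type*} [Nonempty X] (l : List X) :
    ∃ x : ℕ → X, ∀ t : Fin l.length, x t = l.get t :=
  ⟨fun t => l.getD t (Classical.arbitrary _), fun t => l.getD_eq_getElem _ t.2⟩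

namespace IsMarkovPrefixFamily

open Matrix PiNat

variable {π : S → A → ℝ} {P : A → S → S → ℝ} {L : List (S × A) × S → Measure (ℕ → S × A)}
  {l : List (S × A)} {z : S}

section Cylinder

omit [Fintype S] [Fintype A] [Nonempty S] [Nonempty A]

theorem measureReal_cylinder (hfam : IsMarkovPrefixFamily π P L) {n : ℕ} (hn : l.length ≤ n)
    (x : ℕ → S × A) :
    (L (l, z)).real (cylinder x (n + 1)) =
      (if (∀ t : Fin l.length, x t = l.get t) ∧ (x l.length).1 = z then (1 : ℝ) else 0) *
        (π (x l.length).1 (x l.length).2 *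
          ∏ k ∈ Ico l.length n, pairTransition π P (x k) (x (k + 1))) := by
  simp only [PiNat.cylinder, Nat.lt_succ_iff]
  exact hfam l z n hn x

theorem measureReal_cylinder_succ (hfam : IsMarkovPrefixFamily π P L) {n : ℕ}
    (hn : l.length ≤ n) (x : ℕ → S × A) :
    (L (l, z)).real (cylinder x (n + 2)) =
      (L (l, z)).real (cylinder x (n + 1)) * pairTransition π P (x n) (x (n + 1)) := by
  rw [hfam.measureReal_cylinder hn, hfam.measureReal_cylinder (Nat.le_succ_of_le hn),
    prod_Ico_succ_top hn, mul_assoc, mul_assoc]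

theorem measureReal_cylinder_update_length (hfam : IsMarkovPrefixFamily π P L)
    {x : ℕ → S × A} (hx : ∀ t : Fin l.length, x t = l.get t) (p : S × A) :
    (L (l, z)).real (cylinder (Function.update x l.length p) (l.length + 1)) =
      if p.1 = z then π p.1 p.2 else 0 := by
  have hupdate (t : Fin l.length) : Function.update x l.length p t = l.get t :=
    (Function.update_of_ne t.2.ne _ _).trans (hx t)
  rw [hfam.measureReal_cylinder le_rfl, Function.update_self, Ico_self, prod_empty, mul_one,
    ite_mul, one_mul, zero_mul]
  simp only [hupdate, implies_true, true_and]

theorem setIntegral_cylinder_eval_length [Finite S] [Fintype A]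
    (hfam : IsMarkovPrefixFamily π P L) [IsFiniteMeasure (L (l, z))] {x : ℕ → S × A}
    (hx : ∀ t : Fin l.length, x t = l.get t) (F : S × A → ℝ) :
    ∫ ω in cylinder x l.length, F (ω l.length) ∂L (l, z) = policyAverage π F z := by
  cases nonempty_fintype S
  rw [setIntegral_cylinder_eval]
  simp only [hfam.measureReal_cylinder_update_length hx, ite_mul, zero_mul]
  rw [Fintype.sum_prod_type, Fintype.sum_eq_single z fun s hs => by simp only [if_neg hs,
    sum_const_zero]]
  simp only [if_true, policyAverage]

theorem ae_mem_cylinder_length [Finite S] [Fintype A] (hfam : IsMarkovPrefixFamily π P L)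
    (hπ : IsPolicy π) [IsProbabilityMeasure (L (l, z))] {x : ℕ → S × A}
    (hx : ∀ t : Fin l.length, x t = l.get t) :
    ∀ᵐ ω ∂L (l, z), ω ∈ cylinder x l.length := by
  have hmass := hfam.setIntegral_cylinder_eval_length (z := z) hx fun _ => 1
  simp only [setIntegral_const, policyAverage, smul_eq_mul, mul_one, hπ.2] at hmass
  exact (mem_ae_iff_prob_eq_one (measurableSet_cylinder _ _)).2
    ((ENNReal.toReal_eq_one_iff _).1 hmass)

end Cylinder

section Integral

omit [Fintype S] [Nonempty S]

variable [Finite S]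

theorem integral_eval_of_lt (hfam : IsMarkovPrefixFamily π P L) (hπ : IsPolicy π)
    [IsProbabilityMeasure (L (l, z))] (F : S × A → ℝ) {t : ℕ} (ht : t < l.length) :
    ∫ ω, F (ω t) ∂L (l, z) = F l[t] := by
  have : Nonempty S := ⟨z⟩
  obtain ⟨x, hx⟩ := exists_forall_eq_get l
  have hae : ∀ᵐ ω ∂L (l, z), F (ω t) = F l[t] :=
    (hfam.ae_mem_cylinder_length hπ hx).mono fun ω hω =>
      congrArg F ((hω t ht).trans (hx ⟨t, ht⟩))
  rw [integral_congr_ae hae, integral_const, probReal_univ, one_smul]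

theorem integral_eval_length (hfam : IsMarkovPrefixFamily π P L) (hπ : IsPolicy π)
    [IsProbabilityMeasure (L (l, z))] (F : S × A → ℝ) :
    ∫ ω, F (ω l.length) ∂L (l, z) = policyAverage π F z := by
  have : Nonempty S := ⟨z⟩
  obtain ⟨x, hx⟩ := exists_forall_eq_get l
  rw [← hfam.setIntegral_cylinder_eval_length hx,
    Measure.restrict_eq_self_of_ae_mem (hfam.ae_mem_cylinder_length hπ hx)]

end Integral

omit [Nonempty S]

theorem integral_eval_length_add (hfam : IsMarkovPrefixFamily π P L) (hπ : IsPolicy π)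
    [IsProbabilityMeasure (L (l, z))] (F : S × A → ℝ) (k : ℕ) :
    ∫ ω, F (ω (l.length + k)) ∂L (l, z) = (Mmat π P ^ k *ᵥ policyAverage π F) z := by
  have : Nonempty S := ⟨z⟩
  induction k generalizing F with
  | zero => rw [add_zero, hfam.integral_eval_length hπ, pow_zero, one_mulVec]
  | succ k ih =>
    rw [← add_assoc, integral_eval_succ_eq_integral_mulVec
        (hfam.measureReal_cylinder_succ (Nat.le_add_right _ k)), ih,
      policyAverage_pairTransition_mulVec, mulVec_mulVec, ← pow_succ]

theorem exists_tendsto_vdisc (hfam : IsMarkovPrefixFamily π P L)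
    (hprob : ∀ h, IsProbabilityMeasure (L h)) (hπ : IsPolicy π) (hP : IsTransition P) {μ : S → ℝ}
    (hμ : IsCesaroLimit (Mmat π P) μ) {r : S × A → ℝ} (hr : μ ⬝ᵥ policyAverage π r = 0) :
    ∃ V, ∀ h, Tendsto (vdisc (L h) r) (𝓝[<] 1) (𝓝 (Breturn r V h)) := by
  obtain ⟨V, hV⟩ := hμ.exists_tendsto_discountedSum (Mmat_mem_rowStochastic hπ hP) hr
  refine ⟨V, fun ⟨l, z⟩ => ?_⟩
  have := hprob (l, z)
  have hprefix : ∑ t ∈ range l.length, ∫ ω, r (ω t) ∂L (l, z) = (l.map r).sum := by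
    rw [Finset.sum_range, ← Fin.sum_univ_fun_getElem]
    exact sum_congr rfl fun t _ => hfam.integral_eval_of_lt hπ r t.2
  have htail := hV z
  simp only [← hfam.integral_eval_length_add (l := l) (z := z) hπ] at htail
  have hlim := tendsto_discountedSum_of_add (abs_integral_eval_le r) l.length htail
  rwa [hprefix] at hlim

end IsMarkovPrefixFamily

section ChangeOfReward

omit [Fintype S] [DecidableEq S] [Fintype A] [DecidableEq A] [Nonempty S] [Nonempty A]

variable {S' : Set S} {A' : Set A} {r r' : S × A → ℝ} {c : ℝ}
  {pref : Measure (ℕ → S × A) → Measure (ℕ → S × A) → Prop}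

theorem vdisc_sub_const [Finite S] [Finite A] (ℓ : Measure (ℕ → S × A)) [IsProbabilityMeasure ℓ]
    (r : S × A → ℝ) (g : ℝ) {γ : ℝ} (h0 : 0 ≤ γ) (h1 : γ < 1) :
    vdisc ℓ (fun x => r x - g) γ = vdisc ℓ r γ - (1 - γ)⁻¹ * g := by
  cases nonempty_fintype S
  cases nonempty_fintype A
  have hint (t : ℕ) : ∫ ω, (r (ω t) - g) ∂ℓ = ∫ ω, r (ω t) ∂ℓ - g := by
    rw [integral_sub (integrable_eval r t) (integrable_const g), integral_const, probReal_univ,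
      one_smul]
  simp only [vdisc, hint, mul_sub]
  rw [(summable_pow_mul_of_abs_le (abs_integral_eval_le r) h0 h1).tsum_sub
    ((summable_geometric_of_lt_one h0 h1).mul_right g), tsum_mul_right,
    tsum_geometric_of_lt_one h0 h1]

theorem Expresses.sub_const [Finite S] [Finite A] (h : Expresses r pref) (g : ℝ) :
    Expresses (fun x => r x - g) pref := by
  intro ℓ ℓ' hℓ hℓ'
  have := hℓ.1
  have := hℓ'.1
  rw [h ℓ ℓ' hℓ hℓ']
  refine exists_congr fun c => and_congr_right fun _ => tendsto_congr' ?_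
  filter_upwards [eventually_mem_Ioo_zero_one] with γ hγ
  rw [vdisc_sub_const ℓ r g hγ.1.le hγ.2, vdisc_sub_const ℓ' r g hγ.1.le hγ.2,
    sub_sub_sub_cancel_right]

theorem Expresses.expressesPartialOn_of_tendsto (h : Expresses r pref)
    {prefP : List (S × A) × S → List (S × A) × S → Prop}
    {L : List (S × A) × S → Measure (ℕ → S × A)} (hmem : ∀ h, MemLinf (L h))
    (hpref : ∀ h h', prefP h h' ↔ pref (L h) (L h')) {V : S → ℝ}
    (hlim : ∀ h, Tendsto (vdisc (L h) r) (𝓝[<] 1) (𝓝 (Breturn r V h))) (S' : Set S) (A' : Set A) :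
    ExpressesPartialOn S' A' r V prefP := by
  intro p p' _ _
  have hdiff := (hlim p).sub (hlim p')
  rw [hpref, h _ _ (hmem p) (hmem p'), ← sub_nonneg]
  exact ⟨fun ⟨c, hc, hc'⟩ => tendsto_nhds_unique hc' hdiff ▸ hc, fun hle => ⟨_, hle, hdiff⟩⟩

theorem MeasureOn.ae_mem {ℓ : Measure (ℕ → S × A)} [IsProbabilityMeasure ℓ]
    (hℓ : MeasureOn S' A' ℓ) : ∀ᵐ ω ∂ℓ, ∀ t, ω t ∈ S' ×ˢ A' := by
  have hmeas : MeasurableSet {ω : ℕ → S × A | ∀ t, ω t ∈ S' ×ˢ A'} := by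
    rw [Set.ofPred_forall]
    exact .iInter fun t => measurable_pi_apply (X := fun _ => S × A) t .of_discrete
  exact (mem_ae_iff_prob_eq_one hmeas).2 hℓ

theorem vdisc_eq_mul_of_measureOn {ℓ : Measure (ℕ → S × A)} [IsProbabilityMeasure ℓ]
    (hℓ : MeasureOn S' A' ℓ) (hr : ∀ x ∈ S' ×ˢ A', r x = c * r' x) (γ : ℝ) :
    vdisc ℓ r γ = c * vdisc ℓ r' γ := by
  have hint (t : ℕ) : ∫ ω, r (ω t) ∂ℓ = c * ∫ ω, r' (ω t) ∂ℓ := by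
    rw [← integral_const_mul]
    exact integral_congr_ae (hℓ.ae_mem.mono fun ω hω => hr _ (hω t))
  simp only [vdisc, hint, mul_left_comm _ c, tsum_mul_left]

theorem Expresses.expressesOn_of_eq_mul (h : Expresses r' pref) (hc : 0 < c)
    (hr : ∀ x ∈ S' ×ˢ A', r x = c * r' x) : ExpressesOn S' A' r pref := by
  intro ℓ ℓ' hℓ hℓ' hon hon'
  have := hℓ.1
  have := hℓ'.1
  rw [h ℓ ℓ' hℓ hℓ']
  simp only [vdisc_eq_mul_of_measureOn hon hr, vdisc_eq_mul_of_measureOn hon' hr, ← mul_sub]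
  constructor
  · rintro ⟨d, hd, hlim⟩
    exact ⟨c * d, mul_nonneg hc.le hd, hlim.const_mul c⟩
  · rintro ⟨d, hd, hlim⟩
    refine ⟨c⁻¹ * d, mul_nonneg (inv_nonneg.2 hc.le) hd, ?_⟩
    simpa only [inv_mul_cancel_left₀ hc.ne'] using hlim.const_mul c⁻¹

theorem ExpressesPartialOn.exists_pos_eq_mul {V V' : S → ℝ}
    {prefP : List (S × A) × S → List (S × A) × S → Prop}
    (h : ExpressesPartialOn S' A' r V prefP) (h' : ExpressesPartialOn S' A' r' V' prefP)
    (hS' : S'.Nonempty) : ∃ c, 0 < c ∧ ∀ x ∈ S' ×ˢ A', r x = c * r' x := by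
  obtain ⟨z, hz⟩ := hS'
  let total (r : S × A → ℝ) : FreeAddMonoid (S' ×ˢ A' : Set (S × A)) →+ ℝ :=
    FreeAddMonoid.lift fun x => r x
  let traj (l : FreeAddMonoid (S' ×ˢ A' : Set (S × A))) : List (S × A) × S :=
    (l.toList.map Subtype.val, z)
  have hon (l) : PTrajOn S' A' (traj l) :=
    ⟨hz, fun p hp => by
      obtain ⟨x, -, rfl⟩ := List.mem_map.1 hp
      exact x.2⟩
  have hreturn (r : S × A → ℝ) (V : S → ℝ) (l) : Breturn r V (traj l) = total r l + V z := by
    simp only [Breturn, traj, total, List.map_map, FreeAddMonoid.lift_apply, Function.comp_def]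
  have hiff (l l') : total r l < total r l' ↔ total r' l < total r' l' := by
    refine lt_iff_lt_of_le_iff_le ?_
    simpa only [hreturn, add_le_add_iff_right] using
      (h _ _ (hon l) (hon l')).symm.trans (h' _ _ (hon l) (hon l'))
  obtain ⟨c, hc, htotal⟩ := exists_pos_eq_mul_of_map_lt_iff_map_lt hiff
  exact ⟨c, hc, fun x hx => by simpa [total] using htotal (.of ⟨x, hx⟩)⟩

end ChangeOfReward

/-- **Corollary (alignment on a subset).** Under Axioms 1 and 2, for any nonempty
`S' ⊆ S` and `A' ⊆ A`: (1) some pair `(r,V)` expresses `⪰∂` on `(S',A')`; and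
(2) any pair `(r,V)` that expresses `⪰∂` on `(S',A')` has `r` expressing `⪰` on
`(S',A')`. -/
theorem alignment_on_subset
    (pref : Measure (ℕ → S × A) → Measure (ℕ → S × A) → Prop)
    (prefP : List (S × A) × S → List (S × A) × S → Prop)
    (rstar : S × A → ℝ) (hax1 : Expresses rstar pref)
    (π : S → A → ℝ) (P : A → S → S → ℝ)
    (hπ : IsPolicy π) (hP : IsTransition P)
    (huni : Unichain π P)
    (L : List (S × A) × S → Measure (ℕ → S × A))
    (hfam : IsMarkovPrefixFamily π P L)
    (hmem : ∀ h, MemLinf (L h))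
    (hax2 : ∀ h h', prefP h h' ↔ pref (L h) (L h'))
    (S' : Set S) (A' : Set A) (hS' : S'.Nonempty) (hA' : A'.Nonempty) :
    (∃ (r : S × A → ℝ) (V : S → ℝ), ExpressesPartialOn S' A' r V prefP) ∧
      ∀ (r : S × A → ℝ) (V : S → ℝ),
        ExpressesPartialOn S' A' r V prefP → ExpressesOn S' A' r pref := by
  have hprob (h) : IsProbabilityMeasure (L h) := (hmem h).1
  obtain ⟨μ, hμ⟩ : ∃ μ, IsCesaroLimit (Mmat π P) μ := huni
  have hμ_one := hμ.dotProduct_one (Mmat_mem_rowStochastic hπ hP)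
  let g : ℝ := μ ⬝ᵥ policyAverage π rstar
  have hcentred : μ ⬝ᵥ policyAverage π (fun x => rstar x - g) = 0 :=
    (dotProduct_policyAverage_sub_const hπ hμ_one rstar g).trans (sub_self g)
  have hexp : Expresses (fun x => rstar x - g) pref := hax1.sub_const g
  obtain ⟨V₀, hlim⟩ := hfam.exists_tendsto_vdisc hprob hπ hP hμ hcentred
  have hpart := hexp.expressesPartialOn_of_tendsto hmem hax2 hlim S' A'
  refine ⟨⟨_, V₀, hpart⟩, fun r V hrV => ?_⟩
  obtain ⟨c, hc, hr⟩ := hrV.exists_pos_eq_mul hpart hS'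
  exact hexp.expressesOn_of_eq_mul hc hr
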